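/- Let D = (V,E) be a finite digraph and let DX be the Hopf algebroid of flat extendible pivotal-adaptable bimodule connections for the digraph calculus with Ω²_top, presented as a quotient of the path algebra of the double digraph D^db by the relations of Theorems on HX¹ and the triangle/square relations. Then the isotropy quotient DX/⟨s(f_p) − t(f_p) : p ∈ V⟩ is isomorphic as a Hopf algebroid to the groupoid algebra k Π_D of the fundamental groupoid of D. -/

import Mathlib

open TensorProduct

/-! ### A general framework for left bialgebroids and left Hopf algebroids.

Comultiplications are encoded at the level of chosen linear representatives in the
plain tensor product `H ⊗[k] H`; the tensor product over the base algebra `A` is the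
quotient by the `balancer` submodule spanned by the elements
`(t a * x) ⊗ y - x ⊗ (s a * y)`.  Axioms that genuinely live in `H ⊗_A H` are stated
modulo this submodule. -/

section BialgebroidFramework

variable (k A H : Type) [CommRing k] [Ring A] [Ring H] [Algebra k A] [Algebra k H]

/-- The submodule of `H ⊗[k] H` whose quotient is `H ⊗_A H` for the bimodule
structure `a · h · a' = s(a) t(a') h`. -/
def balancer (s : A →ₐ[k] H) (t : A →ₗ[k] H) : Submodule k (H ⊗[k] H) :=
  Submodule.span k {z | ∃ (a : A) (x y : H), z = (t a * x) ⊗ₜ[k] y - x ⊗ₜ[k] (s a * y)}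

/-- The analogous submodule for the triple tensor product. -/
def balancer3 (s : A →ₐ[k] H) (t : A →ₗ[k] H) : Submodule k (H ⊗[k] (H ⊗[k] H)) :=
  Submodule.span k
    ({z | ∃ (a : A) (x y w : H), z = (t a * x) ⊗ₜ[k] (y ⊗ₜ[k] w) - x ⊗ₜ[k] ((s a * y) ⊗ₜ[k] w)} ∪
     {z | ∃ (a : A) (x y w : H), z = x ⊗ₜ[k] ((t a * y) ⊗ₜ[k] w) - x ⊗ₜ[k] (y ⊗ₜ[k] (s a * w))})

/-- The submodule of `H ⊗[k] H` whose quotient is `H ⊗_{A^op} H`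
(balanced over the target map: `(x * t a) ⊗ y ~ x ⊗ (t a * y)`). -/
def opBalancer (t : A →ₗ[k] H) : Submodule k (H ⊗[k] H) :=
  Submodule.span k {z | ∃ (a : A) (x y : H), z = (x * t a) ⊗ₜ[k] y - x ⊗ₜ[k] (t a * y)}

/-- A left `A`-bialgebroid structure on the `k`-algebra `H`. -/
structure LeftBialgebroid where
  /-- the source map -/
  src : A →ₐ[k] H
  /-- the target map (an anti-algebra map) -/
  tgt : A →ₗ[k] H
  tgt_one : tgt 1 = 1
  tgt_mul : ∀ a b : A, tgt (a * b) = tgt b * tgt a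
  src_tgt_comm : ∀ a b : A, src a * tgt b = tgt b * src a
  /-- a linear representative of the comultiplication `H → H ⊗_A H` -/
  comul : H →ₗ[k] H ⊗[k] H
  /-- the counit -/
  counit : H →ₗ[k] A
  counit_one : counit 1 = 1
  counit_src : ∀ (a : A) (h : H), counit (src a * h) = a * counit h
  counit_tgt : ∀ (a : A) (h : H), counit (tgt a * h) = counit h * a
  counit_mul : ∀ g h : H, counit (g * h) = counit (g * src (counit h))
  comul_one : comul 1 - (1 : H) ⊗ₜ[k] (1 : H) ∈ balancer k A H src tgt
  comul_mul : ∀ g h : H, comul (g * h) - comul g * comul h ∈ balancer k A H src tgt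
  comul_bimod : ∀ (a a' : A) (h : H),
    comul (src a * (tgt a' * h)) -
      (TensorProduct.map (LinearMap.mulLeft k (src a)) (LinearMap.mulLeft k (tgt a')))
        (comul h) ∈ balancer k A H src tgt
  comul_coassoc : ∀ h : H,
    (TensorProduct.assoc k H H H) ((LinearMap.rTensor H comul) (comul h)) -
      (LinearMap.lTensor H comul) (comul h) ∈ balancer3 k A H src tgt
  comul_counit_left : ∀ h : H,
    (LinearMap.mul' k H) ((LinearMap.rTensor H (src.toLinearMap ∘ₗ counit)) (comul h)) = h
  comul_counit_right : ∀ h : H,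
    (LinearMap.mul' k H)
      ((LinearMap.rTensor H (tgt ∘ₗ counit)) ((TensorProduct.comm k H H) (comul h))) = h

variable {k A H}

/-- Two-sided ideals, encoded as `k`-submodules closed under multiplication. -/
structure IsTwoSidedIdeal (I : Submodule k H) : Prop where
  mul_mem_left : ∀ (h x : H), x ∈ I → h * x ∈ I
  mul_mem_right : ∀ (h x : H), x ∈ I → x * h ∈ I

variable (k H) in
/-- The image of `I ⊗ H` inside `H ⊗[k] H`. -/
def leftSlice (I : Submodule k H) : Submodule k (H ⊗[k] H) :=
  Submodule.span k {z | ∃ x ∈ I, ∃ y : H, z = x ⊗ₜ[k] y}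

variable (k H) in
/-- The image of `H ⊗ I` inside `H ⊗[k] H`. -/
def rightSlice (I : Submodule k H) : Submodule k (H ⊗[k] H) :=
  Submodule.span k {z | ∃ y : H, ∃ x ∈ I, z = y ⊗ₜ[k] x}

/-- `I` is a two-sided coideal of the `A`-coring `H`:
`Δ(I) ⊆ Im(I ⊗_A H + H ⊗_A I)` and `ε(I) = 0`. -/
structure IsCoideal (B : LeftBialgebroid k A H) (I : Submodule k H) : Prop where
  comul_mem : ∀ x ∈ I,
    B.comul x ∈ leftSlice k H I ⊔ rightSlice k H I ⊔ balancer k A H B.src B.tgt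
  counit_eq_zero : ∀ x ∈ I, B.counit x = 0

/-- A morphism of left bialgebroids over the same base `A`. -/
def IsBialgebroidHom {H' : Type} [Ring H'] [Algebra k H']
    (B : LeftBialgebroid k A H) (B' : LeftBialgebroid k A H') (f : H →ₐ[k] H') : Prop :=
  (∀ a : A, f (B.src a) = B'.src a) ∧ (∀ a : A, f (B.tgt a) = B'.tgt a) ∧
  (∀ h : H, B'.counit (f h) = B.counit h) ∧
  (∀ h : H, (TensorProduct.map f.toLinearMap f.toLinearMap) (B.comul h) - B'.comul (f h)
      ∈ balancer k A H' B'.src B'.tgt)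

variable (k A H) in
/-- A representative of the Galois map `β : H ⊗_{A^op} H → H ⊗_A H`,
`b ⊗ b' ↦ b₍₁₎ ⊗ b₍₂₎ b'`. -/
noncomputable def galoisRep (B : LeftBialgebroid k A H) : H ⊗[k] H →ₗ[k] H ⊗[k] H :=
  TensorProduct.lift
    (LinearMap.mk₂ k (fun b b' => B.comul b * ((1 : H) ⊗ₜ[k] b'))
      (by intros; simp [mul_add, add_mul, TensorProduct.tmul_add, TensorProduct.add_tmul, smul_mul_assoc, mul_smul_comm, ← TensorProduct.smul_tmul', TensorProduct.tmul_smul])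
      (by intros; simp [mul_add, add_mul, TensorProduct.tmul_add, TensorProduct.add_tmul, smul_mul_assoc, mul_smul_comm, ← TensorProduct.smul_tmul', TensorProduct.tmul_smul])
      (by intros; simp [mul_add, add_mul, TensorProduct.tmul_add, TensorProduct.add_tmul, smul_mul_assoc, mul_smul_comm, ← TensorProduct.smul_tmul', TensorProduct.tmul_smul])
      (by intros; simp [mul_add, add_mul, TensorProduct.tmul_add, TensorProduct.add_tmul, smul_mul_assoc, mul_smul_comm, ← TensorProduct.smul_tmul', TensorProduct.tmul_smul]))

/-- A left bialgebroid is a left Hopf algebroid (Schauenburg) when the Galois map,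
viewed as a map `H ⊗_{A^op} H → H ⊗_A H`, is bijective. -/
structure IsLeftHopf (B : LeftBialgebroid k A H) : Prop where
  descends : opBalancer k A H B.tgt ≤
    (balancer k A H B.src B.tgt).comap (galoisRep k A H B)
  bijective : Function.Bijective
    (Submodule.mapQ (opBalancer k A H B.tgt) (balancer k A H B.src B.tgt)
      (galoisRep k A H B) descends)

/-- The (left) Hopf condition for an ideal: for every `h ∈ I`,
`β⁻¹(h ⊗ 1)` lies in the image of `I ⊗_{A^op} H + H ⊗_{A^op} I`; equivalently there is a
representative `w` in the slices with `β(w) = h ⊗ 1` in `H ⊗_A H`. -/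
def HopfIdealCondition (B : LeftBialgebroid k A H) (I : Submodule k H) : Prop :=
  ∀ h ∈ I, ∃ w ∈ leftSlice k H I ⊔ rightSlice k H I,
    galoisRep k A H B w - h ⊗ₜ[k] (1 : H) ∈ balancer k A H B.src B.tgt

/-- A Hopf ideal pair `(J, I)` of a left Hopf algebroid, allowing base change. -/
structure IsHopfIdealPair (B : LeftBialgebroid k A H)
    (J : Submodule k A) (I : Submodule k H) : Prop where
  idealJ : IsTwoSidedIdeal J
  idealI : IsTwoSidedIdeal I
  src_mem : ∀ a ∈ J, B.src a ∈ I
  tgt_mem : ∀ a ∈ J, B.tgt a ∈ I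
  comul_mem : ∀ x ∈ I,
    B.comul x ∈ leftSlice k H I ⊔ rightSlice k H I ⊔ balancer k A H B.src B.tgt
  counit_mem : ∀ x ∈ I, B.counit x ∈ J
  hopf : HopfIdealCondition B I

/-- An (invertible) antipode on a left bialgebroid. -/
structure Antipode (B : LeftBialgebroid k A H) where
  S : H ≃ₗ[k] H
  S_one : S 1 = 1
  S_mul : ∀ g h : H, S (g * h) = S h * S g
  S_src : ∀ a : A, S (B.src a) = B.tgt a
  antipode2 : ∀ b : H,
    (TensorProduct.lift (LinearMap.mk₂ k
        (fun x y => B.comul (S x) * (y ⊗ₜ[k] (1 : H)))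
        (by intros; simp [mul_add, add_mul, TensorProduct.tmul_add, TensorProduct.add_tmul, smul_mul_assoc, mul_smul_comm, ← TensorProduct.smul_tmul', TensorProduct.tmul_smul])
        (by intros; simp [mul_add, add_mul, TensorProduct.tmul_add, TensorProduct.add_tmul, smul_mul_assoc, mul_smul_comm, ← TensorProduct.smul_tmul', TensorProduct.tmul_smul])
        (by intros; simp [mul_add, add_mul, TensorProduct.tmul_add, TensorProduct.add_tmul, smul_mul_assoc, mul_smul_comm, ← TensorProduct.smul_tmul', TensorProduct.tmul_smul])
        (by intros; simp [mul_add, add_mul, TensorProduct.tmul_add, TensorProduct.add_tmul, smul_mul_assoc, mul_smul_comm, ← TensorProduct.smul_tmul', TensorProduct.tmul_smul])))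
      (B.comul b) - (1 : H) ⊗ₜ[k] (S b) ∈ balancer k A H B.src B.tgt
  antipode3 : ∀ b : H,
    (TensorProduct.lift (LinearMap.mk₂ k
        (fun x y => B.comul (S.symm y) * ((1 : H) ⊗ₜ[k] x))
        (by intros; simp [mul_add, add_mul, TensorProduct.tmul_add, TensorProduct.add_tmul, smul_mul_assoc, mul_smul_comm, ← TensorProduct.smul_tmul', TensorProduct.tmul_smul])
        (by intros; simp [mul_add, add_mul, TensorProduct.tmul_add, TensorProduct.add_tmul, smul_mul_assoc, mul_smul_comm, ← TensorProduct.smul_tmul', TensorProduct.tmul_smul])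
        (by intros; simp [mul_add, add_mul, TensorProduct.tmul_add, TensorProduct.add_tmul, smul_mul_assoc, mul_smul_comm, ← TensorProduct.smul_tmul', TensorProduct.tmul_smul])
        (by intros; simp [mul_add, add_mul, TensorProduct.tmul_add, TensorProduct.add_tmul, smul_mul_assoc, mul_smul_comm, ← TensorProduct.smul_tmul', TensorProduct.tmul_smul])))
      (B.comul b) - (S.symm b) ⊗ₜ[k] (1 : H) ∈ balancer k A H B.src B.tgt

end BialgebroidFramework

section DoubleDigraph

/-- Generators of the path algebra of the double digraph `D^db`:
vertex idempotents `⟪p,q⟫`, parallel-pair generators `(a→b ‖ c→d)`, reversed-pair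
generators `(a→b ⫽ c→d)`, and the mixed generators `(a→b | q)` and `(c→d ∤ p)`. -/
inductive DGen (V : Type) (E : V → V → Prop) : Type
  | pt : V → V → DGen V E
  | par : ∀ a b c d : V, E a b → E c d → DGen V E
  | rev : ∀ a b c d : V, E a b → E c d → DGen V E
  | lt : ∀ a b : V, E a b → V → DGen V E
  | rt : ∀ c d : V, E c d → V → DGen V E

variable (k V : Type) [Field k] [Fintype V] [DecidableEq V]
variable (E : V → V → Prop) [DecidableRel E]

open FreeAlgebra DGen in
/-- The relations presenting the Hopf algebroid `HX¹` of the digraph calculus as a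
quotient of the path algebra `kD^db` (path-algebra relations together with the
relations of the theorem on `HX¹`). -/
inductive HXRel : FreeAlgebra k (DGen V E) → FreeAlgebra k (DGen V E) → Prop
  | pt_mul (p q p' q' : V) :
      HXRel (ι k (pt (E := E) p q) * ι k (pt (E := E) p' q'))
        (if p = p' ∧ q = q' then ι k (pt (E := E) p q) else 0)
  | one_eq : HXRel 1 (∑ p : V, ∑ q : V, ι k (pt (E := E) p q))
  | par_norm (a b c d : V) (hab : E a b) (hcd : E c d) :
      HXRel (ι k (par a b c d hab hcd))
        (ι k (pt (E := E) b d) * ι k (par a b c d hab hcd) * ι k (pt (E := E) a c))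
  | rev_norm (a b c d : V) (hab : E a b) (hcd : E c d) :
      HXRel (ι k (rev a b c d hab hcd))
        (ι k (pt (E := E) a c) * ι k (rev a b c d hab hcd) * ι k (pt (E := E) b d))
  | lt_norm (a b : V) (hab : E a b) (q : V) :
      HXRel (ι k (lt a b hab q))
        (ι k (pt (E := E) b q) * ι k (lt a b hab q) * ι k (pt (E := E) a q))
  | rt_norm (c d : V) (hcd : E c d) (p : V) :
      HXRel (ι k (rt c d hcd p))
        (ι k (pt (E := E) p c) * ι k (rt c d hcd p) * ι k (pt (E := E) p d))
  | h1a (q a b p : V) (hab : E a b) (hpb : E p b) :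
      HXRel (∑ i : V, if h : E q i then
          ι k (rev a b q i hab h) * ι k (par p b q i hpb h) else 0)
        (if a = p then ι k (pt (E := E) a q) else 0)
  | h1b (q a b p : V) (hab : E a b) (hpb : E p b) :
      HXRel (∑ i : V, if h : E q i then
          ι k (rev q i a b h hab) * ι k (par q i p b h hpb) else 0)
        (if a = p then ι k (pt (E := E) a q) else 0)
  | h2a (q d a p : V) (hda : E d a) (hdp : E d p) :
      HXRel (∑ i : V, if h : E i q then
          ι k (par d a i q hda h) * ι k (rev d p i q hdp h) else 0)
        (if a = p then ι k (pt (E := E) a q) else 0)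
  | h2b (q d a p : V) (hda : E d a) (hdp : E d p) :
      HXRel (∑ i : V, if h : E i q then
          ι k (par i q d a h hda) * ι k (rev i q d p h hdp) else 0)
        (if a = p then ι k (pt (E := E) a q) else 0)
  | h3a (s t q : V) (hst : E s t) :
      HXRel (ι k (rt s t hst q))
        (∑ i : V, if h : E q i then
          ι k (rev q i s t h hst) * ι k (lt q i h t) else 0)
  | h3b (s t q : V) (hst : E s t) :
      HXRel (∑ i : V, if h : E i q then
          ι k (par s t i q hst h) * ι k (rt i q h s) else 0)
        (ι k (lt s t hst q))

open FreeAlgebra DGen in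
/-- The expression `𝐏(p,q,r;a,b)` of the paper. -/
noncomputable def Pexpr (p q r : V) (hpq : E p q) (hqr : E q r) (a b : V) :
    FreeAlgebra k (DGen V E) :=
  (∑ i : V, if h : E a i ∧ E i b then
      ι k (par q r i b hqr h.2) * ι k (par p q a i hpq h.1) else 0) -
  (if hab : E a b then
      ι k (lt q r hqr b) * ι k (par p q a b hpq hab) +
        ι k (par q r a b hqr hab) * ι k (lt p q hpq a)
    else 0)

open FreeAlgebra DGen in
/-- The expression `𝐐(p,q,r;a,b)` of the paper. -/
noncomputable def Qexpr (p q r : V) (hpq : E p q) (hqr : E q r) (a b : V) :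
    FreeAlgebra k (DGen V E) :=
  (∑ i : V, if h : E a i ∧ E i b then
      ι k (rev a i p q h.1 hpq) * ι k (rev i b q r h.2 hqr) else 0) +
  (if hab : E a b then
      ι k (rev a b p q hab hpq) * ι k (rt q r hqr b) +
        ι k (rt p q hpq a) * ι k (rev a b q r hab hqr)
    else 0)

open FreeAlgebra DGen in
/-- The relations presenting the Hopf algebroid `DX` for the digraph calculus with
`Ω²_top`: the relations of `HX¹` together with the square and triangle relations. -/
inductive DXRel : FreeAlgebra k (DGen V E) → FreeAlgebra k (DGen V E) → Prop
  | hx {x y : FreeAlgebra k (DGen V E)} : HXRel k V E x y → DXRel x y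
  | sq1 (p q q' r c : V) (hpq : E p q) (hqr : E q r) (hpq' : E p q') (hq'r : E q' r) :
      DXRel (ι k (lt q r hqr c) * ι k (lt p q hpq c))
        (ι k (lt q' r hq'r c) * ι k (lt p q' hpq' c))
  | sq1' (p q q' r c : V) (hpq : E p q) (hqr : E q r) (hpq' : E p q') (hq'r : E q' r) :
      DXRel (ι k (rt p q hpq c) * ι k (rt q r hqr c))
        (ι k (rt p q' hpq' c) * ι k (rt q' r hq'r c))
  | sq2 (p q q' r a b : V) (hpq : E p q) (hqr : E q r) (hpq' : E p q') (hq'r : E q' r) :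
      DXRel (Pexpr k V E p q r hpq hqr a b) (Pexpr k V E p q' r hpq' hq'r a b)
  | sq2' (p q q' r a b : V) (hpq : E p q) (hqr : E q r) (hpq' : E p q') (hq'r : E q' r) :
      DXRel (Qexpr k V E p q r hpq hqr a b) (Qexpr k V E p q' r hpq' hq'r a b)
  | tri1 (p q r c : V) (hpq : E p q) (hqr : E q r) (hpr : E p r) :
      DXRel (ι k (lt q r hqr c) * ι k (lt p q hpq c)) (-(ι k (lt p r hpr c)))
  | tri1' (p q r c : V) (hpq : E p q) (hqr : E q r) (hpr : E p r) :
      DXRel (ι k (rt p q hpq c) * ι k (rt q r hqr c)) (ι k (rt p r hpr c))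
  | tri2 (p q r a b : V) (hpq : E p q) (hqr : E q r) (hpr : E p r) :
      DXRel (Pexpr k V E p q r hpq hqr a b)
        (if h : E a b then ι k (par p r a b hpr h) else 0)
  | tri2' (p q r a b : V) (hpq : E p q) (hqr : E q r) (hpr : E p r) :
      DXRel (Qexpr k V E p q r hpq hqr a b)
        (if h : E a b then ι k (rev a b p r h hpr) else 0)

open FreeAlgebra DGen in
/-- Pins for the bialgebroid structure carried by a quotient of the path algebra of
the double digraph (the structure maps of Theorem `HX¹`/Corollary on the digraph
bialgebroid), relative to a map `gen` interpreting the generators. -/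
def IsDoubleDigraphBialgebroid (W : Type) [Ring W] [Algebra k W]
    (gen : DGen V E → W) (B : LeftBialgebroid k (V → k) W) : Prop :=
  (∀ p : V, B.src (Pi.single p 1) = ∑ q : V, gen (pt (E := E) p q)) ∧
  (∀ p : V, B.tgt (Pi.single p 1) = ∑ q : V, gen (pt (E := E) q p)) ∧
  (∀ p q : V, B.counit (gen (pt (E := E) p q)) =
    if p = q then Pi.single p (1 : k) else 0) ∧
  (∀ (a b c d : V) (hab : E a b) (hcd : E c d),
    B.counit (gen (par a b c d hab hcd)) =
      (if a = c ∧ b = d then Pi.single b (1 : k) else 0) ∧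
    B.counit (gen (rev a b c d hab hcd)) =
      (if a = c ∧ b = d then Pi.single a (1 : k) else 0)) ∧
  (∀ (a b : V) (hab : E a b) (q : V),
    B.counit (gen (lt a b hab q)) = 0 ∧ B.counit (gen (rt a b hab q)) = 0) ∧
  (∀ p q : V,
    B.comul (gen (pt (E := E) p q)) -
        (∑ i : V, gen (pt (E := E) p i) ⊗ₜ[k] gen (pt (E := E) i q))
      ∈ balancer k (V → k) W B.src B.tgt) ∧
  (∀ (a b c d : V) (hab : E a b) (hcd : E c d),
    B.comul (gen (par a b c d hab hcd)) -
        (∑ s : V, ∑ t : V, if h : E s t then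
          gen (par a b s t hab h) ⊗ₜ[k] gen (par s t c d h hcd) else 0)
      ∈ balancer k (V → k) W B.src B.tgt ∧
    B.comul (gen (rev a b c d hab hcd)) -
        (∑ s : V, ∑ t : V, if h : E s t then
          gen (rev a b s t hab h) ⊗ₜ[k] gen (rev s t c d h hcd) else 0)
      ∈ balancer k (V → k) W B.src B.tgt) ∧
  (∀ (a b : V) (hab : E a b) (c : V),
    B.comul (gen (lt a b hab c)) -
        ((∑ s : V, ∑ t : V, if h : E s t then
            gen (par a b s t hab h) ⊗ₜ[k] gen (lt s t h c) else 0) +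
          ∑ t : V, gen (lt a b hab t) ⊗ₜ[k] gen (pt (E := E) t c))
      ∈ balancer k (V → k) W B.src B.tgt ∧
    B.comul (gen (rt a b hab c)) -
        ((∑ s : V, ∑ t : V, if h : E s t then
            gen (rt s t h c) ⊗ₜ[k] gen (rev s t a b h hab) else 0) +
          ∑ t : V, gen (pt (E := E) c t) ⊗ₜ[k] gen (rt a b hab t))
      ∈ balancer k (V → k) W B.src B.tgt)

end DoubleDigraph

section FundamentalGroupoid

/-- Generators of the fundamental groupoid `Π_D` of a digraph. -/
inductive PiGen (V : Type) (E : V → V → Prop) : Type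
  | id : V → PiGen V E
  | fwd : ∀ a b : V, E a b → PiGen V E
  | bwd : ∀ a b : V, E a b → PiGen V E

variable (k V : Type) [Field k] [Fintype V] [DecidableEq V] (E : V → V → Prop)

open FreeAlgebra in
/-- The defining relations of the groupoid algebra `kΠ_D` of the fundamental groupoid
of a digraph. -/
inductive PiRel : FreeAlgebra k (PiGen V E) → FreeAlgebra k (PiGen V E) → Prop
  | idem (p q : V) :
      PiRel (ι k (PiGen.id p) * ι k (PiGen.id q))
        (if p = q then ι k (PiGen.id (E := E) p) else 0)
  | unit : PiRel 1 (∑ p : V, ι k (PiGen.id (E := E) p))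
  | fwd_norm (a b : V) (h : E a b) :
      PiRel (ι k (PiGen.fwd a b h))
        (ι k (PiGen.id (E := E) b) * ι k (PiGen.fwd a b h) * ι k (PiGen.id (E := E) a))
  | bwd_norm (a b : V) (h : E a b) :
      PiRel (ι k (PiGen.bwd a b h))
        (ι k (PiGen.id (E := E) a) * ι k (PiGen.bwd a b h) * ι k (PiGen.id (E := E) b))
  | inv_left (a b : V) (h : E a b) :
      PiRel (ι k (PiGen.bwd a b h) * ι k (PiGen.fwd a b h)) (ι k (PiGen.id (E := E) a))
  | inv_right (a b : V) (h : E a b) :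
      PiRel (ι k (PiGen.fwd a b h) * ι k (PiGen.bwd a b h)) (ι k (PiGen.id (E := E) b))
  | triangle (p q r : V) (hpq : E p q) (hqr : E q r) (hpr : E p r) :
      PiRel (ι k (PiGen.fwd q r hqr) * ι k (PiGen.fwd p q hpq)) (ι k (PiGen.fwd p r hpr))
  | square (p q q' r : V) (hpq : E p q) (hqr : E q r) (hpq' : E p q') (hq'r : E q' r) :
      PiRel (ι k (PiGen.fwd q r hqr) * ι k (PiGen.fwd p q hpq))
        (ι k (PiGen.fwd q' r hq'r) * ι k (PiGen.fwd p q' hpq'))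

/-- The groupoid algebra `kΠ_D`. -/
abbrev PiAlgebra : Type := RingQuot (PiRel k V E)

/-- The canonical projection onto `kΠ_D`. -/
noncomputable def piMk : FreeAlgebra k (PiGen V E) →ₐ[k] PiAlgebra k V E :=
  RingQuot.mkAlgHom k (PiRel k V E)

open FreeAlgebra in
/-- Pins for the groupoid-algebra Hopf algebroid structure on `kΠ_D`. -/
def IsPiAlgebroid [DecidableRel E] (B : LeftBialgebroid k (V → k) (PiAlgebra k V E)) :
    Prop :=
  (∀ p : V, B.src (Pi.single p 1) = piMk k V E (ι k (PiGen.id (E := E) p)) ∧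
    B.tgt (Pi.single p 1) = piMk k V E (ι k (PiGen.id (E := E) p))) ∧
  (∀ p : V, B.counit (piMk k V E (ι k (PiGen.id (E := E) p))) = Pi.single p 1) ∧
  (∀ (a b : V) (h : E a b),
    B.counit (piMk k V E (ι k (PiGen.fwd a b h))) = Pi.single b 1 ∧
    B.counit (piMk k V E (ι k (PiGen.bwd a b h))) = Pi.single a 1) ∧
  (∀ g : PiGen V E,
    B.comul (piMk k V E (ι k g)) - (piMk k V E (ι k g)) ⊗ₜ[k] (piMk k V E (ι k g))
      ∈ balancer k (V → k) (PiAlgebra k V E) B.src B.tgt)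

end FundamentalGroupoid

open FreeAlgebra in
/-- The relations of `DX` together with the isotropy relations `s(f_p) = t(f_p)`. -/
inductive DXIsoRel (k V : Type) [Field k] [Fintype V] [DecidableEq V]
    (E : V → V → Prop) [DecidableRel E] :
    FreeAlgebra k (DGen V E) → FreeAlgebra k (DGen V E) → Prop
  | dx {x y : FreeAlgebra k (DGen V E)} : DXRel k V E x y → DXIsoRel k V E x y
  | iso (p : V) : DXIsoRel k V E (∑ q : V, ι k (DGen.pt (E := E) p q))
      (∑ q : V, ι k (DGen.pt (E := E) q p))

section BialgebroidComparison

variable {k A H H' : Type} [CommRing k] [Ring A] [Ring H] [Ring H'] [Algebra k A] [Algebra k H]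
  [Algebra k H']

/-- A submodule of `H` which contains `1` and is stable under left multiplication by a family
generating `H` as an algebra is everything. -/
lemma submodule_eq_top_of_generator_mul_mem {X : Type} (f : FreeAlgebra k X →ₐ[k] H)
    (hf : Function.Surjective f) (P : Submodule k H) (h_one : (1 : H) ∈ P)
    (h_mul : ∀ x : X, ∀ y ∈ P, f (FreeAlgebra.ι k x) * y ∈ P) : P = ⊤ := by
  have key : ∀ z : FreeAlgebra k X, ∀ y ∈ P, f z * y ∈ P := by
    intro z
    induction z using FreeAlgebra.induction with
    | grade0 r =>
      intro y hy
      rw [AlgHom.commutes, ← Algebra.smul_def]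
      exact P.smul_mem r hy
    | grade1 x => exact h_mul x
    | mul a b ha hb =>
      intro y hy
      rw [map_mul, mul_assoc]
      exact ha _ (hb y hy)
    | add a b ha hb =>
      intro y hy
      rw [map_add, add_mul]
      exact P.add_mem (ha y hy) (hb y hy)
  refine Submodule.eq_top_iff'.2 fun y => ?_
  obtain ⟨z, rfl⟩ := hf y
  simpa using key z 1 h_one

lemma balancer_mul_mem {s : A →ₐ[k] H} {t : A →ₗ[k] H} {z : H ⊗[k] H}
    (hz : z ∈ balancer k A H s t) (w : H ⊗[k] H) : z * w ∈ balancer k A H s t := by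
  suffices h : balancer k A H s t ≤
      (balancer k A H s t).comap (LinearMap.mulRight k w) from h hz
  refine Submodule.span_le.2 ?_
  rintro _ ⟨a, x, y, rfl⟩
  induction w using TensorProduct.induction_on with
  | zero => simp
  | tmul u v =>
    refine Submodule.subset_span ⟨a, x * u, y * v, ?_⟩
    simp [sub_mul, mul_assoc]
  | add u v hu hv =>
    simp only [SetLike.mem_coe, Submodule.mem_comap, LinearMap.mulRight_apply, mul_add] at *
    exact Submodule.add_mem _ hu hv

/-- Left multiplication by `g ⊗ g` kills the balancer when `g t(a) = g s(a)` is a scalar multiple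
of `g` for all `a`. -/
lemma tmul_mul_mem_balancer {s : A →ₐ[k] H} {t : A →ₗ[k] H} {g : H}
    (hg : ∀ a, ∃ c : k, g * s a = c • g ∧ g * t a = c • g) {z : H ⊗[k] H}
    (hz : z ∈ balancer k A H s t) : (g ⊗ₜ[k] g) * z ∈ balancer k A H s t := by
  suffices h : balancer k A H s t ≤
      (balancer k A H s t).comap (LinearMap.mulLeft k (g ⊗ₜ[k] g)) from h hz
  refine Submodule.span_le.2 ?_
  rintro _ ⟨a, x, y, rfl⟩
  obtain ⟨c, hs, ht⟩ := hg a
  have : (g ⊗ₜ[k] g) * ((t a * x) ⊗ₜ[k] y - x ⊗ₜ[k] (s a * y)) = 0 := by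
    simp [mul_sub, ← mul_assoc, hs, ht, TensorProduct.tmul_smul, TensorProduct.smul_tmul']
  simp [this]

lemma map_mem_balancer {s : A →ₐ[k] H} {t : A →ₗ[k] H} {s' : A →ₐ[k] H'} {t' : A →ₗ[k] H'}
    {f : H →ₐ[k] H'} (hs : ∀ a, f (s a) = s' a) (ht : ∀ a, f (t a) = t' a) {z : H ⊗[k] H}
    (hz : z ∈ balancer k A H s t) :
    TensorProduct.map f.toLinearMap f.toLinearMap z ∈ balancer k A H' s' t' := by
  suffices h : balancer k A H s t ≤ (balancer k A H' s' t').comap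
      (TensorProduct.map f.toLinearMap f.toLinearMap) from h hz
  refine Submodule.span_le.2 ?_
  rintro _ ⟨a, x, y, rfl⟩
  exact Submodule.subset_span ⟨a, f x, f y, by simp [hs, ht]⟩

/-- An algebra isomorphism compatible with sources and targets is a bialgebroid morphism as soon as
it respects counits and comultiplications on a generating family of group-like elements on which
the base acts from the right by scalars. -/
lemma isBialgebroidHom_of_generators {X : Type} (B : LeftBialgebroid k A H)
    (B' : LeftBialgebroid k A H') (Φ : H ≃ₐ[k] H') (π : FreeAlgebra k X →ₐ[k] H')
    (hπ : Function.Surjective π)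
    (hsrc : ∀ a, Φ (B.src a) = B'.src a) (htgt : ∀ a, Φ (B.tgt a) = B'.tgt a)
    (hscalar : ∀ (x : X) (a : A), ∃ c : k,
      π (FreeAlgebra.ι k x) * B'.src a = c • π (FreeAlgebra.ι k x) ∧
      π (FreeAlgebra.ι k x) * B'.tgt a = c • π (FreeAlgebra.ι k x))
    (hcounit : ∀ x : X,
      B.counit (Φ.symm (π (FreeAlgebra.ι k x))) = B'.counit (π (FreeAlgebra.ι k x)))
    (hcomul : ∀ x : X, TensorProduct.map Φ.toAlgHom.toLinearMap Φ.toAlgHom.toLinearMap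
        (B.comul (Φ.symm (π (FreeAlgebra.ι k x)))) -
          π (FreeAlgebra.ι k x) ⊗ₜ[k] π (FreeAlgebra.ι k x) ∈ balancer k A H' B'.src B'.tgt)
    (hcomul' : ∀ x : X, B'.comul (π (FreeAlgebra.ι k x)) -
          π (FreeAlgebra.ι k x) ⊗ₜ[k] π (FreeAlgebra.ι k x) ∈ balancer k A H' B'.src B'.tgt) :
    IsBialgebroidHom B B' Φ.toAlgHom := by
  have hsrc' : ∀ a, Φ.symm (B'.src a) = B.src a := fun a => by
    rw [← hsrc, AlgEquiv.symm_apply_apply]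
  have counit_eq : LinearMap.eqLocus (B.counit ∘ₗ Φ.symm.toLinearMap) B'.counit = ⊤ := by
    refine submodule_eq_top_of_generator_mul_mem π hπ _ ?_ ?_
    · simp [LinearMap.mem_eqLocus, B.counit_one, B'.counit_one]
    · intro x y hy
      simp only [LinearMap.mem_eqLocus, LinearMap.comp_apply, AlgEquiv.toLinearMap_apply] at hy ⊢
      obtain ⟨c, hc, -⟩ := hscalar x (B'.counit y)
      rw [map_mul, B.counit_mul, B'.counit_mul, hy, ← hsrc', ← map_mul, hc, map_smul, map_smul,
        map_smul, hcounit]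
  set F := TensorProduct.map Φ.toAlgHom.toLinearMap Φ.toAlgHom.toLinearMap with hF
  have F_mul : ∀ z w, F (z * w) = F z * F w :=
    fun z w => map_mul (Algebra.TensorProduct.map Φ.toAlgHom Φ.toAlgHom) z w
  have F_balancer : ∀ z ∈ balancer k A H B.src B.tgt, F z ∈ balancer k A H' B'.src B'.tgt :=
    fun z hz => map_mem_balancer hsrc htgt hz
  have comul_eq : (balancer k A H' B'.src B'.tgt).comap
      (F ∘ₗ B.comul ∘ₗ Φ.symm.toLinearMap - B'.comul) = ⊤ := by
    refine submodule_eq_top_of_generator_mul_mem π hπ _ ?_ ?_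
    · have h := Submodule.sub_mem _ (F_balancer _ B.comul_one) B'.comul_one
      simp only [map_sub, hF, TensorProduct.map_tmul] at h
      simpa [hF] using h
    · intro x y hy
      simp only [Submodule.mem_comap, LinearMap.sub_apply, LinearMap.comp_apply,
        AlgEquiv.toLinearMap_apply] at hy ⊢
      set g := π (FreeAlgebra.ι k x)
      have h₁ := F_balancer _ (B.comul_mul (Φ.symm g) (Φ.symm y))
      rw [map_sub, F_mul] at h₁
      have h₂ := balancer_mul_mem (hcomul x) (F (B.comul (Φ.symm y)))
      have h₃ := tmul_mul_mem_balancer (hscalar x) hy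
      have h₄ := balancer_mul_mem (hcomul' x) (B'.comul y)
      have h₅ := B'.comul_mul g y
      rw [map_mul]
      convert Submodule.sub_mem _ (Submodule.sub_mem _
        (Submodule.add_mem _ (Submodule.add_mem _ h₁ h₂) h₃) h₄) h₅ using 1
      noncomm_ring
  refine ⟨hsrc, htgt, fun h => ?_, fun h => ?_⟩
  · have := LinearMap.mem_eqLocus.1 (counit_eq.ge (Submodule.mem_top (x := Φ h)))
    simpa using this.symm
  · have := comul_eq.ge (Submodule.mem_top (x := Φ h))
    simp only [Submodule.mem_comap, LinearMap.sub_apply, LinearMap.comp_apply,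
      AlgEquiv.toLinearMap_apply, AlgEquiv.symm_apply_apply] at this
    exact this

end BialgebroidComparison

lemma map_sum_dite {k V R A : Type} [CommSemiring k] [Fintype V] [Semiring R] [Semiring A]
    [Algebra k R] [Algebra k A] (f : R →ₐ[k] A) (P : V → Prop) [DecidablePred P]
    (x : ∀ i, P i → R) (j : V)
    (hx : ∀ i (h : P i), i ≠ j → f (x i h) = 0) :
    f (∑ i : V, if h : P i then x i h else 0) = if h : P j then f (x j h) else 0 := by
  rw [map_sum, Finset.sum_eq_single j]
  · split_ifs <;> simp
  · intro i _ hi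
    split_ifs with h
    · exact hx i h hi
    · exact map_zero f
  · simp

section DiagonalInterpretation

open FreeAlgebra DGen

variable {k V : Type} [Field k] [Fintype V] [DecidableEq V] {E : V → V → Prop} [DecidableRel E]
  {A : Type} [Ring A] [Algebra k A]

/-- An interpretation of the generators of `D^db` which kills the mixed generators, and the
parallel-pair and reversed-pair generators whose two arrows differ. -/
structure IsDiagonal (f : FreeAlgebra k (DGen V E) →ₐ[k] A) : Prop where
  par_eq_zero : ∀ (a b c d : V) (hab : E a b) (hcd : E c d), ¬(a = c ∧ b = d) →
    f (ι k (par a b c d hab hcd)) = 0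
  rev_eq_zero : ∀ (a b c d : V) (hab : E a b) (hcd : E c d), ¬(a = c ∧ b = d) →
    f (ι k (rev a b c d hab hcd)) = 0
  lt_eq_zero : ∀ (a b : V) (hab : E a b) (q : V), f (ι k (lt a b hab q)) = 0
  rt_eq_zero : ∀ (a b : V) (hab : E a b) (q : V), f (ι k (rt a b hab q)) = 0

namespace IsDiagonal

variable {f : FreeAlgebra k (DGen V E) →ₐ[k] A} (hf : IsDiagonal f)
include hf

lemma map_Pexpr (p q r : V) (hpq : E p q) (hqr : E q r) (a b : V) :
    f (Pexpr k V E p q r hpq hqr a b) = if a = p ∧ b = r then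
      f (ι k (par q r q r hqr hqr)) * f (ι k (par p q p q hpq hpq)) else 0 := by
  rw [Pexpr, map_sub, map_sum_dite f (fun i => E a i ∧ E i b) _ q]
  · have h₀ : f (if hab : E a b then ι k (lt q r hqr b) * ι k (par p q a b hpq hab) +
        ι k (par q r a b hqr hab) * ι k (lt p q hpq a) else 0) = 0 := by
      split_ifs <;> simp [hf.lt_eq_zero]
    rw [h₀, sub_zero]
    by_cases h : a = p ∧ b = r
    · obtain ⟨rfl, rfl⟩ := h
      simp [hpq, hqr]
    · rw [if_neg h]
      split_ifs with h'
      · rw [map_mul]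
        by_cases ha : a = p
        · rw [hf.par_eq_zero q r q b _ _ (by tauto), zero_mul]
        · rw [hf.par_eq_zero p q a q _ _ (by tauto), mul_zero]
      · rfl
  · intro i h hi
    rw [map_mul, hf.par_eq_zero q r i b _ _ (by tauto), zero_mul]

lemma map_Qexpr (p q r : V) (hpq : E p q) (hqr : E q r) (a b : V) :
    f (Qexpr k V E p q r hpq hqr a b) = if a = p ∧ b = r then
      f (ι k (rev p q p q hpq hpq)) * f (ι k (rev q r q r hqr hqr)) else 0 := by
  rw [Qexpr, map_add, map_sum_dite f (fun i => E a i ∧ E i b) _ q]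
  · have h₀ : f (if hab : E a b then ι k (rev a b p q hab hpq) * ι k (rt q r hqr b) +
        ι k (rt p q hpq a) * ι k (rev a b q r hab hqr) else 0) = 0 := by
      split_ifs <;> simp [hf.rt_eq_zero]
    rw [h₀, add_zero]
    by_cases h : a = p ∧ b = r
    · obtain ⟨rfl, rfl⟩ := h
      simp [hpq, hqr]
    · rw [if_neg h]
      split_ifs with h'
      · rw [map_mul]
        by_cases ha : a = p
        · rw [hf.rev_eq_zero q b q r _ _ (by tauto), mul_zero]
        · rw [hf.rev_eq_zero a q p q _ _ (by tauto), zero_mul]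
      · rfl
  · intro i h hi
    rw [map_mul, hf.rev_eq_zero a i p q _ _ (by tauto), zero_mul]

lemma map_sum_rev_mul_par_left (q a b p : V) (hab : E a b) (hpb : E p b) :
    f (∑ i : V, if h : E q i then ι k (rev a b q i hab h) * ι k (par p b q i hpb h) else 0) =
      if a = q ∧ p = q then
        f (ι k (rev a b a b hab hab)) * f (ι k (par a b a b hab hab)) else 0 := by
  rw [map_sum_dite f (fun i => E q i) _ b]
  · by_cases h : a = q ∧ p = q
    · obtain ⟨rfl, rfl⟩ := h
      simp [hab]
    · rw [if_neg h]
      split_ifs with h'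
      · rw [map_mul]
        by_cases ha : a = q
        · rw [hf.par_eq_zero p b q b _ _ (by tauto), mul_zero]
        · rw [hf.rev_eq_zero a b q b _ _ (by tauto), zero_mul]
      · rfl
  · intro i h hi
    rw [map_mul, hf.rev_eq_zero a b q i _ _ (by tauto), zero_mul]

lemma map_sum_rev_mul_par_right (q a b p : V) (hab : E a b) (hpb : E p b) :
    f (∑ i : V, if h : E q i then ι k (rev q i a b h hab) * ι k (par q i p b h hpb) else 0) =
      if a = q ∧ p = q then
        f (ι k (rev a b a b hab hab)) * f (ι k (par a b a b hab hab)) else 0 := by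
  rw [map_sum_dite f (fun i => E q i) _ b]
  · by_cases h : a = q ∧ p = q
    · obtain ⟨rfl, rfl⟩ := h
      simp [hab]
    · rw [if_neg h]
      split_ifs with h'
      · rw [map_mul]
        by_cases ha : a = q
        · rw [hf.par_eq_zero q b p b _ _ (by tauto), mul_zero]
        · rw [hf.rev_eq_zero q b a b _ _ (by tauto), zero_mul]
      · rfl
  · intro i h hi
    rw [map_mul, hf.rev_eq_zero q i a b _ _ (by tauto), zero_mul]

lemma map_sum_par_mul_rev_left (q d a p : V) (hda : E d a) (hdp : E d p) :
    f (∑ i : V, if h : E i q then ι k (par d a i q hda h) * ι k (rev d p i q hdp h) else 0) =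
      if a = q ∧ p = q then
        f (ι k (par d a d a hda hda)) * f (ι k (rev d a d a hda hda)) else 0 := by
  rw [map_sum_dite f (fun i => E i q) _ d]
  · by_cases h : a = q ∧ p = q
    · obtain ⟨rfl, rfl⟩ := h
      simp [hda]
    · rw [if_neg h]
      split_ifs with h'
      · rw [map_mul]
        by_cases ha : a = q
        · rw [hf.rev_eq_zero d p d q _ _ (by tauto), mul_zero]
        · rw [hf.par_eq_zero d a d q _ _ (by tauto), zero_mul]
      · rfl
  · intro i h hi
    rw [map_mul, hf.par_eq_zero d a i q _ _ (by tauto), zero_mul]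

lemma map_sum_par_mul_rev_right (q d a p : V) (hda : E d a) (hdp : E d p) :
    f (∑ i : V, if h : E i q then ι k (par i q d a h hda) * ι k (rev i q d p h hdp) else 0) =
      if a = q ∧ p = q then
        f (ι k (par d a d a hda hda)) * f (ι k (rev d a d a hda hda)) else 0 := by
  rw [map_sum_dite f (fun i => E i q) _ d]
  · by_cases h : a = q ∧ p = q
    · obtain ⟨rfl, rfl⟩ := h
      simp [hda]
    · rw [if_neg h]
      split_ifs with h'
      · rw [map_mul]
        by_cases ha : a = q
        · rw [hf.rev_eq_zero d q d p _ _ (by tauto), mul_zero]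
        · rw [hf.par_eq_zero d q d a _ _ (by tauto), zero_mul]
      · rfl
  · intro i h hi
    rw [map_mul, hf.par_eq_zero i q d a _ _ (by tauto), zero_mul]

end IsDiagonal

end DiagonalInterpretation

section FundamentalGroupoidAlgebra

open FreeAlgebra

/-- The source vertex of a generator of the fundamental groupoid. -/
def PiGen.source {V : Type} {E : V → V → Prop} : PiGen V E → V
  | .id p => p
  | .fwd a _ _ => a
  | .bwd _ b _ => b

variable {k V : Type} [Field k] [Fintype V] [DecidableEq V] {E : V → V → Prop}

lemma piMk_rel {x y : FreeAlgebra k (PiGen V E)} (h : PiRel k V E x y) :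
    piMk k V E x = piMk k V E y :=
  RingQuot.mkAlgHom_rel k h

lemma piMk_id_mul_id (p q : V) : piMk k V E (ι k (.id p)) * piMk k V E (ι k (.id q)) =
    if p = q then piMk k V E (ι k (.id p)) else 0 := by
  rw [← map_mul, piMk_rel (PiRel.idem p q)]
  split_ifs <;> simp

lemma piMk_fwd_norm (a b : V) (h : E a b) : piMk k V E (ι k (.id b)) *
    piMk k V E (ι k (.fwd a b h)) * piMk k V E (ι k (.id a)) = piMk k V E (ι k (.fwd a b h)) := by
  simpa using (piMk_rel (k := k) (PiRel.fwd_norm a b h)).symm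

lemma piMk_bwd_norm (a b : V) (h : E a b) : piMk k V E (ι k (.id a)) *
    piMk k V E (ι k (.bwd a b h)) * piMk k V E (ι k (.id b)) = piMk k V E (ι k (.bwd a b h)) := by
  simpa using (piMk_rel (k := k) (PiRel.bwd_norm a b h)).symm

lemma piMk_mul_id (g : PiGen V E) (p : V) : piMk k V E (ι k g) * piMk k V E (ι k (.id p)) =
    if g.source = p then piMk k V E (ι k g) else 0 := by
  cases g with
  | id q => exact piMk_id_mul_id q p
  | fwd a b h =>
    rw [← piMk_fwd_norm, mul_assoc, piMk_id_mul_id]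
    split_ifs <;> simp_all [PiGen.source]
  | bwd a b h =>
    rw [← piMk_bwd_norm, mul_assoc, piMk_id_mul_id]
    split_ifs <;> simp_all [PiGen.source]

lemma piMk_id_mul_fwd (a b : V) (h : E a b) :
    piMk k V E (ι k (.id b)) * piMk k V E (ι k (.fwd a b h)) = piMk k V E (ι k (.fwd a b h)) := by
  rw [← piMk_fwd_norm, ← mul_assoc, ← mul_assoc, piMk_id_mul_id, if_pos rfl]

lemma piMk_id_mul_bwd (a b : V) (h : E a b) :
    piMk k V E (ι k (.id a)) * piMk k V E (ι k (.bwd a b h)) = piMk k V E (ι k (.bwd a b h)) := by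
  rw [← piMk_bwd_norm, ← mul_assoc, ← mul_assoc, piMk_id_mul_id, if_pos rfl]

lemma piMk_bwd_mul_fwd (a b : V) (h : E a b) :
    piMk k V E (ι k (.bwd a b h)) * piMk k V E (ι k (.fwd a b h)) = piMk k V E (ι k (.id a)) := by
  simpa using piMk_rel (k := k) (PiRel.inv_left a b h)

lemma piMk_fwd_mul_bwd (a b : V) (h : E a b) :
    piMk k V E (ι k (.fwd a b h)) * piMk k V E (ι k (.bwd a b h)) = piMk k V E (ι k (.id b)) := by
  simpa using piMk_rel (k := k) (PiRel.inv_right a b h)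

lemma piMk_fwd_mul_fwd_of_triangle {p q r : V} (hpq : E p q) (hqr : E q r) (hpr : E p r) :
    piMk k V E (ι k (.fwd q r hqr)) * piMk k V E (ι k (.fwd p q hpq)) =
      piMk k V E (ι k (.fwd p r hpr)) := by
  simpa using piMk_rel (k := k) (PiRel.triangle p q r hpq hqr hpr)

lemma piMk_fwd_mul_fwd_of_square {p q q' r : V} (hpq : E p q) (hqr : E q r) (hpq' : E p q')
    (hq'r : E q' r) : piMk k V E (ι k (.fwd q r hqr)) * piMk k V E (ι k (.fwd p q hpq)) =
      piMk k V E (ι k (.fwd q' r hq'r)) * piMk k V E (ι k (.fwd p q' hpq')) := by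
  simpa using piMk_rel (k := k) (PiRel.square p q q' r hpq hqr hpq' hq'r)

lemma piMk_bwd_mul_bwd_eq {p q r : V} (hpq : E p q) (hqr : E q r) {y : PiAlgebra k V E}
    (hxy : piMk k V E (ι k (.fwd q r hqr)) * piMk k V E (ι k (.fwd p q hpq)) * y =
      piMk k V E (ι k (.id r))) (hy : piMk k V E (ι k (.id p)) * y = y) :
    piMk k V E (ι k (.bwd p q hpq)) * piMk k V E (ι k (.bwd q r hqr)) = y := by
  have hr : piMk k V E (ι k (.bwd q r hqr)) * piMk k V E (ι k (.id r)) =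
      piMk k V E (ι k (.bwd q r hqr)) := by
    simp [piMk_mul_id, PiGen.source]
  calc _ = piMk k V E (ι k (.bwd p q hpq)) * (piMk k V E (ι k (.bwd q r hqr)) *
        piMk k V E (ι k (.fwd q r hqr)) * piMk k V E (ι k (.fwd p q hpq))) * y := by
        conv_lhs => rw [← hr, ← hxy]
        simp only [mul_assoc]
    _ = y := by rw [piMk_bwd_mul_fwd, piMk_id_mul_fwd, piMk_bwd_mul_fwd, hy]

lemma piMk_bwd_mul_bwd_of_triangle {p q r : V} (hpq : E p q) (hqr : E q r) (hpr : E p r) :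
    piMk k V E (ι k (.bwd p q hpq)) * piMk k V E (ι k (.bwd q r hqr)) =
      piMk k V E (ι k (.bwd p r hpr)) := by
  refine piMk_bwd_mul_bwd_eq hpq hqr ?_ (piMk_id_mul_bwd p r hpr)
  rw [piMk_fwd_mul_fwd_of_triangle hpq hqr hpr, piMk_fwd_mul_bwd]

lemma piMk_bwd_mul_bwd_of_square {p q q' r : V} (hpq : E p q) (hqr : E q r) (hpq' : E p q')
    (hq'r : E q' r) : piMk k V E (ι k (.bwd p q hpq)) * piMk k V E (ι k (.bwd q r hqr)) =
      piMk k V E (ι k (.bwd p q' hpq')) * piMk k V E (ι k (.bwd q' r hq'r)) := by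
  refine piMk_bwd_mul_bwd_eq hpq hqr ?_ (by rw [← mul_assoc, piMk_id_mul_bwd])
  rw [piMk_fwd_mul_fwd_of_square hpq hqr hpq' hq'r, mul_assoc,
    ← mul_assoc (piMk k V E (ι k (.fwd p q' hpq'))), piMk_fwd_mul_bwd, piMk_id_mul_bwd,
    piMk_fwd_mul_bwd]

end FundamentalGroupoidAlgebra

section IsotropyQuotient

open FreeAlgebra DGen

variable (k V : Type) [Field k] [Fintype V] [DecidableEq V] (E : V → V → Prop)

/-- The interpretation of the generators of `D^db` in `kΠ_D`. -/
noncomputable def dgenToPi : DGen V E → PiAlgebra k V E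
  | pt p q => if p = q then piMk k V E (ι k (.id p)) else 0
  | par a b c d hab _ => if a = c ∧ b = d then piMk k V E (ι k (.fwd a b hab)) else 0
  | rev a b c d hab _ => if a = c ∧ b = d then piMk k V E (ι k (.bwd a b hab)) else 0
  | lt _ _ _ _ => 0
  | rt _ _ _ _ => 0

variable [DecidableRel E]

/-- The projection of the path algebra of `D^db` onto the isotropy quotient of `DX`. -/
noncomputable abbrev isoMk : FreeAlgebra k (DGen V E) →ₐ[k] RingQuot (DXIsoRel k V E) :=
  RingQuot.mkAlgHom k (DXIsoRel k V E)

/-- The interpretation of the generators of `kΠ_D` in the isotropy quotient of `DX`. -/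
noncomputable def piGenToIso : PiGen V E → RingQuot (DXIsoRel k V E)
  | .id p => isoMk k V E (ι k (pt p p))
  | .fwd a b h => isoMk k V E (ι k (par a b a b h h))
  | .bwd a b h => isoMk k V E (ι k (rev a b a b h h))

variable {k V E}

omit [DecidableRel E] in
lemma isDiagonal_lift_dgenToPi : IsDiagonal (lift k (dgenToPi k V E)) where
  par_eq_zero a b c d hab hcd h := by rw [lift_ι_apply]; exact if_neg h
  rev_eq_zero a b c d hab hcd h := by rw [lift_ι_apply]; exact if_neg h
  lt_eq_zero a b hab q := by rw [lift_ι_apply]; rfl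
  rt_eq_zero a b hab q := by rw [lift_ι_apply]; rfl

omit [DecidableRel E] in
lemma lift_dgenToPi_pt (p q : V) : lift k (dgenToPi k V E) (ι k (pt p q)) =
    if p = q then piMk k V E (ι k (.id p)) else 0 :=
  lift_ι_apply _ _

omit [DecidableRel E] in
lemma lift_dgenToPi_par (a b c d : V) (hab : E a b) (hcd : E c d) :
    lift k (dgenToPi k V E) (ι k (par a b c d hab hcd)) =
      if a = c ∧ b = d then piMk k V E (ι k (.fwd a b hab)) else 0 :=
  lift_ι_apply _ _

omit [DecidableRel E] in
lemma lift_dgenToPi_rev (a b c d : V) (hab : E a b) (hcd : E c d) :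
    lift k (dgenToPi k V E) (ι k (rev a b c d hab hcd)) =
      if a = c ∧ b = d then piMk k V E (ι k (.bwd a b hab)) else 0 :=
  lift_ι_apply _ _

lemma lift_dgenToPi_hxRel {x y : FreeAlgebra k (DGen V E)} (h : HXRel k V E x y) :
    lift k (dgenToPi k V E) x = lift k (dgenToPi k V E) y := by
  have hf := isDiagonal_lift_dgenToPi (k := k) (V := V) (E := E)
  induction h with
  | pt_mul p q p' q' =>
    rw [map_mul, lift_dgenToPi_pt, lift_dgenToPi_pt, apply_ite (lift k (dgenToPi k V E)), map_zero,
      lift_dgenToPi_pt]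
    have := piMk_id_mul_id (k := k) (E := E) p p'
    split_ifs <;> simp_all
  | one_eq =>
    have := piMk_rel (k := k) (PiRel.unit (E := E))
    simp_all [map_sum, dgenToPi]
  | par_norm a b c d hab hcd =>
    simp only [map_mul, lift_dgenToPi_pt, lift_dgenToPi_par]
    have := piMk_fwd_norm (k := k) a b hab
    split_ifs <;> simp_all
  | rev_norm a b c d hab hcd =>
    simp only [map_mul, lift_dgenToPi_pt, lift_dgenToPi_rev]
    have := piMk_bwd_norm (k := k) a b hab
    split_ifs <;> simp_all
  | lt_norm a b hab q => simp [hf.lt_eq_zero]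
  | rt_norm c d hcd p => simp [hf.rt_eq_zero]
  | h1a q a b p hab hpb =>
    rw [hf.map_sum_rev_mul_par_left, lift_dgenToPi_rev, lift_dgenToPi_par,
      apply_ite (lift k (dgenToPi k V E)), map_zero, lift_dgenToPi_pt]
    have := piMk_bwd_mul_fwd (k := k) a b hab
    split_ifs <;> simp_all
  | h1b q a b p hab hpb =>
    rw [hf.map_sum_rev_mul_par_right, lift_dgenToPi_rev, lift_dgenToPi_par,
      apply_ite (lift k (dgenToPi k V E)), map_zero, lift_dgenToPi_pt]
    have := piMk_bwd_mul_fwd (k := k) a b hab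
    split_ifs <;> simp_all
  | h2a q d a p hda hdp =>
    rw [hf.map_sum_par_mul_rev_left, lift_dgenToPi_rev, lift_dgenToPi_par,
      apply_ite (lift k (dgenToPi k V E)), map_zero, lift_dgenToPi_pt]
    have := piMk_fwd_mul_bwd (k := k) d a hda
    split_ifs <;> simp_all
  | h2b q d a p hda hdp =>
    rw [hf.map_sum_par_mul_rev_right, lift_dgenToPi_rev, lift_dgenToPi_par,
      apply_ite (lift k (dgenToPi k V E)), map_zero, lift_dgenToPi_pt]
    have := piMk_fwd_mul_bwd (k := k) d a hda
    split_ifs <;> simp_all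
  | h3a s t q hst =>
    rw [hf.rt_eq_zero, map_sum]
    refine (Finset.sum_eq_zero fun i _ => ?_).symm
    split_ifs <;> simp [hf.lt_eq_zero]
  | h3b s t q hst =>
    rw [hf.lt_eq_zero, map_sum]
    refine Finset.sum_eq_zero fun i _ => ?_
    split_ifs <;> simp [hf.rt_eq_zero]

lemma lift_dgenToPi_dxRel {x y : FreeAlgebra k (DGen V E)} (h : DXRel k V E x y) :
    lift k (dgenToPi k V E) x = lift k (dgenToPi k V E) y := by
  have hf := isDiagonal_lift_dgenToPi (k := k) (V := V) (E := E)
  induction h with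
  | hx h => exact lift_dgenToPi_hxRel h
  | sq1 => simp [hf.lt_eq_zero]
  | sq1' => simp [hf.rt_eq_zero]
  | sq2 p q q' r a b hpq hqr hpq' hq'r =>
    simp [hf.map_Pexpr, dgenToPi, piMk_fwd_mul_fwd_of_square hpq hqr hpq' hq'r]
  | sq2' p q q' r a b hpq hqr hpq' hq'r =>
    simp [hf.map_Qexpr, dgenToPi, piMk_bwd_mul_bwd_of_square hpq hqr hpq' hq'r]
  | tri1 => simp [hf.lt_eq_zero]
  | tri1' => simp [hf.rt_eq_zero]
  | tri2 p q r a b hpq hqr hpr =>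
    by_cases h : a = p ∧ b = r
    · obtain ⟨rfl, rfl⟩ := h
      simp [hf.map_Pexpr, dgenToPi, piMk_fwd_mul_fwd_of_triangle hpq hqr hpr, hpr]
    · rw [hf.map_Pexpr, if_neg h]
      split_ifs
      · rw [hf.par_eq_zero p r a b hpr _ fun h' => h ⟨h'.1.symm, h'.2.symm⟩]
      · rw [map_zero]
  | tri2' p q r a b hpq hqr hpr =>
    by_cases h : a = p ∧ b = r
    · obtain ⟨rfl, rfl⟩ := h
      simp [hf.map_Qexpr, dgenToPi, piMk_bwd_mul_bwd_of_triangle hpq hqr hpr, hpr]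
    · rw [hf.map_Qexpr, if_neg h]
      split_ifs
      · rw [hf.rev_eq_zero a b p r _ hpr h]
      · rw [map_zero]

lemma lift_dgenToPi_dxIsoRel ⦃x y : FreeAlgebra k (DGen V E)⦄ (h : DXIsoRel k V E x y) :
    lift k (dgenToPi k V E) x = lift k (dgenToPi k V E) y := by
  induction h with
  | dx h => exact lift_dgenToPi_dxRel h
  | iso p => simp [map_sum, dgenToPi]

lemma isoMk_dx {x y : FreeAlgebra k (DGen V E)} (h : DXRel k V E x y) :
    isoMk k V E x = isoMk k V E y :=
  RingQuot.mkAlgHom_rel k (.dx h)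

lemma isoMk_hx {x y : FreeAlgebra k (DGen V E)} (h : HXRel k V E x y) :
    isoMk k V E x = isoMk k V E y :=
  isoMk_dx (.hx h)

lemma isoMk_pt_mul_pt (p q p' q' : V) :
    isoMk k V E (ι k (pt p q)) * isoMk k V E (ι k (pt p' q')) =
      if p = p' ∧ q = q' then isoMk k V E (ι k (pt p q)) else 0 := by
  rw [← map_mul, isoMk_hx (.pt_mul p q p' q'), apply_ite (isoMk k V E), map_zero]

lemma isoMk_pt_eq_zero {p q : V} (h : p ≠ q) : isoMk k V E (ι k (pt p q)) = 0 := by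
  have key := congrArg (isoMk k V E (ι k (pt p q)) * ·)
    (RingQuot.mkAlgHom_rel k (DXIsoRel.iso (k := k) (E := E) p))
  simpa [map_sum, Finset.mul_sum, isoMk_pt_mul_pt, h.symm, ite_and] using key

lemma isDiagonal_isoMk (hloop : ∀ v : V, ¬ E v v) : IsDiagonal (isoMk k V E) where
  par_eq_zero a b c d hab hcd h := by
    rw [isoMk_hx (.par_norm a b c d hab hcd), map_mul, map_mul]
    by_cases hac : a = c
    · rw [isoMk_pt_eq_zero (p := b) (q := d) (by tauto), zero_mul, zero_mul]
    · rw [isoMk_pt_eq_zero hac, mul_zero]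
  rev_eq_zero a b c d hab hcd h := by
    rw [isoMk_hx (.rev_norm a b c d hab hcd), map_mul, map_mul]
    by_cases hac : a = c
    · rw [isoMk_pt_eq_zero (p := b) (q := d) (by tauto), mul_zero]
    · rw [isoMk_pt_eq_zero hac, zero_mul, zero_mul]
  lt_eq_zero a b hab q := by
    rw [isoMk_hx (.lt_norm a b hab q), map_mul, map_mul]
    by_cases haq : a = q
    · subst haq
      rw [isoMk_pt_eq_zero (p := b) (q := a) (fun h => hloop a (h ▸ hab)), zero_mul, zero_mul]
    · rw [isoMk_pt_eq_zero haq, mul_zero]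
  rt_eq_zero a b hab q := by
    rw [isoMk_hx (.rt_norm a b hab q), map_mul, map_mul]
    by_cases hqa : q = a
    · subst hqa
      rw [isoMk_pt_eq_zero (p := q) (q := b) (fun h => hloop q (by rwa [← h] at hab)), mul_zero]
    · rw [isoMk_pt_eq_zero hqa, zero_mul, zero_mul]

lemma lift_piGenToIso_piRel (hloop : ∀ v : V, ¬ E v v) ⦃x y : FreeAlgebra k (PiGen V E)⦄
    (h : PiRel k V E x y) : lift k (piGenToIso k V E) x = lift k (piGenToIso k V E) y := by
  have hf := isDiagonal_isoMk (k := k) hloop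
  induction h with
  | idem p q =>
    rw [apply_ite (lift k (piGenToIso k V E)), map_zero, map_mul]
    simpa [piGenToIso] using isoMk_pt_mul_pt (k := k) (E := E) p p q q
  | unit =>
    rw [map_one, ← map_one (isoMk k V E), isoMk_hx .one_eq, map_sum, map_sum]
    refine Finset.sum_congr rfl fun p _ => ?_
    rw [map_sum, Finset.sum_eq_single p (fun q _ h => isoMk_pt_eq_zero h.symm) (by simp),
      lift_ι_apply, piGenToIso]
  | fwd_norm a b h => simpa [piGenToIso] using isoMk_hx (k := k) (.par_norm a b a b h h)
  | bwd_norm a b h => simpa [piGenToIso] using isoMk_hx (k := k) (.rev_norm a b a b h h)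
  | inv_left a b h =>
    have := isoMk_hx (k := k) (.h1a a a b a h h)
    rw [hf.map_sum_rev_mul_par_left] at this
    simpa [piGenToIso] using this
  | inv_right a b h =>
    have := isoMk_hx (k := k) (.h2a b a b b h h)
    rw [hf.map_sum_par_mul_rev_left] at this
    simpa [piGenToIso] using this
  | triangle p q r hpq hqr hpr =>
    have := isoMk_dx (k := k) (.tri2 p q r p r hpq hqr hpr)
    rw [hf.map_Pexpr, dif_pos hpr] at this
    simpa [piGenToIso] using this
  | square p q q' r hpq hqr hpq' hq'r =>
    have := isoMk_dx (k := k) (.sq2 p q q' r p r hpq hqr hpq' hq'r)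
    rw [hf.map_Pexpr, hf.map_Pexpr] at this
    simpa [piGenToIso] using this

variable (k V E) in
/-- The algebra map from the isotropy quotient of `DX` to `kΠ_D`. -/
noncomputable def isoToPi : RingQuot (DXIsoRel k V E) →ₐ[k] PiAlgebra k V E :=
  RingQuot.liftAlgHom k ⟨lift k (dgenToPi k V E), lift_dgenToPi_dxIsoRel⟩

variable (k) in
/-- The algebra map from `kΠ_D` to the isotropy quotient of `DX`. -/
noncomputable def piToIso (hloop : ∀ v : V, ¬ E v v) :
    PiAlgebra k V E →ₐ[k] RingQuot (DXIsoRel k V E) :=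
  RingQuot.liftAlgHom k ⟨lift k (piGenToIso k V E), lift_piGenToIso_piRel hloop⟩

lemma isoToPi_isoMk (x : FreeAlgebra k (DGen V E)) :
    isoToPi k V E (isoMk k V E x) = lift k (dgenToPi k V E) x :=
  RingQuot.liftAlgHom_mkAlgHom_apply _ _ _ _

lemma piToIso_piMk (hloop : ∀ v : V, ¬ E v v) (x : FreeAlgebra k (PiGen V E)) :
    piToIso k hloop (piMk k V E x) = lift k (piGenToIso k V E) x :=
  RingQuot.liftAlgHom_mkAlgHom_apply _ _ _ _

lemma isoToPi_comp_piToIso (hloop : ∀ v : V, ¬ E v v) :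
    (isoToPi k V E).comp (piToIso k hloop) = AlgHom.id k _ := by
  refine RingQuot.ringQuot_ext' _ _ _ (FreeAlgebra.hom_ext (funext fun g => ?_))
  change isoToPi k V E (piToIso k hloop (piMk k V E (ι k g))) = piMk k V E (ι k g)
  rw [piToIso_piMk, lift_ι_apply]
  cases g <;> simp [piGenToIso, isoToPi_isoMk, dgenToPi]

lemma piToIso_comp_isoToPi (hloop : ∀ v : V, ¬ E v v) :
    (piToIso k hloop).comp (isoToPi k V E) = AlgHom.id k _ := by
  have hf := isDiagonal_isoMk (k := k) hloop
  refine RingQuot.ringQuot_ext' _ _ _ (FreeAlgebra.hom_ext (funext fun g => ?_))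
  change piToIso k hloop (isoToPi k V E (isoMk k V E (ι k g))) = isoMk k V E (ι k g)
  rw [isoToPi_isoMk]
  cases g with
  | pt p q =>
    rw [lift_dgenToPi_pt]
    split_ifs with h
    · subst h
      rw [piToIso_piMk, lift_ι_apply, piGenToIso]
    · rw [map_zero, isoMk_pt_eq_zero h]
  | par a b c d hab hcd =>
    rw [lift_dgenToPi_par]
    split_ifs with h
    · obtain ⟨rfl, rfl⟩ := h
      rw [piToIso_piMk, lift_ι_apply, piGenToIso]
    · rw [map_zero, hf.par_eq_zero _ _ _ _ _ _ h]
  | rev a b c d hab hcd =>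
    rw [lift_dgenToPi_rev]
    split_ifs with h
    · obtain ⟨rfl, rfl⟩ := h
      rw [piToIso_piMk, lift_ι_apply, piGenToIso]
    · rw [map_zero, hf.rev_eq_zero _ _ _ _ _ _ h]
  | lt a b hab q => rw [isDiagonal_lift_dgenToPi.lt_eq_zero, map_zero, hf.lt_eq_zero]
  | rt a b hab q => rw [isDiagonal_lift_dgenToPi.rt_eq_zero, map_zero, hf.rt_eq_zero]

variable (k) in
/-- The isotropy quotient of `DX` is isomorphic to `kΠ_D` as an algebra. -/
noncomputable def isoEquivPi (hloop : ∀ v : V, ¬ E v v) :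
    RingQuot (DXIsoRel k V E) ≃ₐ[k] PiAlgebra k V E :=
  AlgEquiv.ofAlgHom (isoToPi k V E) (piToIso k hloop) (isoToPi_comp_piToIso hloop)
    (piToIso_comp_isoToPi hloop)

end IsotropyQuotient

open FreeAlgebra DGen in
/-- For a finite digraph `D`, the isotropy quotient of the Hopf
algebroid `DX` (presented as a quotient of the path algebra of the double digraph by
the `HX¹` relations together with the triangle and square relations) is isomorphic, as
a Hopf algebroid, to the groupoid algebra `kΠ_D` of the fundamental groupoid of `D`. -/
theorem statement17
    (k V : Type) [Field k] [Fintype V] [DecidableEq V]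
    (E : V → V → Prop) [DecidableRel E] (hloop : ∀ v : V, ¬ E v v)
    (B₁ : LeftBialgebroid k (V → k) (RingQuot (DXIsoRel k V E)))
    (hB₁ : IsDoubleDigraphBialgebroid k V E (RingQuot (DXIsoRel k V E))
      (fun g => RingQuot.mkAlgHom k (DXIsoRel k V E) (ι k g)) B₁)
    (B₂ : LeftBialgebroid k (V → k) (PiAlgebra k V E))
    (hB₂ : IsPiAlgebroid k V E B₂) :
    ∃ Φ : RingQuot (DXIsoRel k V E) ≃ₐ[k] PiAlgebra k V E,
      (∀ p q : V, Φ (RingQuot.mkAlgHom k (DXIsoRel k V E) (ι k (pt (E := E) p q))) =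
        if p = q then piMk k V E (ι k (PiGen.id (E := E) p)) else 0) ∧
      (∀ (a b c d : V) (hab : E a b) (hcd : E c d),
        Φ (RingQuot.mkAlgHom k (DXIsoRel k V E) (ι k (par a b c d hab hcd))) =
          (if a = c ∧ b = d then piMk k V E (ι k (PiGen.fwd a b hab)) else 0) ∧
        Φ (RingQuot.mkAlgHom k (DXIsoRel k V E) (ι k (rev a b c d hab hcd))) =
          (if a = c ∧ b = d then piMk k V E (ι k (PiGen.bwd a b hab)) else 0)) ∧
      (∀ (a b : V) (hab : E a b) (q : V),
        Φ (RingQuot.mkAlgHom k (DXIsoRel k V E) (ι k (lt a b hab q))) = 0 ∧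
        Φ (RingQuot.mkAlgHom k (DXIsoRel k V E) (ι k (rt a b hab q))) = 0) ∧
      IsBialgebroidHom B₁ B₂ Φ.toAlgHom := by
  have hpt : ∀ p q : V, isoEquivPi k hloop (isoMk k V E (ι k (pt p q))) =
      if p = q then piMk k V E (ι k (PiGen.id (E := E) p)) else 0 := fun p q =>
    (isoToPi_isoMk _).trans (lift_dgenToPi_pt p q)
  have hpar : ∀ (a b c d : V) (hab : E a b) (hcd : E c d),
      isoEquivPi k hloop (isoMk k V E (ι k (par a b c d hab hcd))) =
        if a = c ∧ b = d then piMk k V E (ι k (PiGen.fwd a b hab)) else 0 :=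
    fun a b c d hab hcd => (isoToPi_isoMk _).trans (lift_dgenToPi_par a b c d hab hcd)
  have hrev : ∀ (a b c d : V) (hab : E a b) (hcd : E c d),
      isoEquivPi k hloop (isoMk k V E (ι k (rev a b c d hab hcd))) =
        if a = c ∧ b = d then piMk k V E (ι k (PiGen.bwd a b hab)) else 0 :=
    fun a b c d hab hcd => (isoToPi_isoMk _).trans (lift_dgenToPi_rev a b c d hab hcd)
  refine ⟨isoEquivPi k hloop, hpt, fun a b c d hab hcd => ⟨hpar a b c d hab hcd,
    hrev a b c d hab hcd⟩, fun a b hab q => ⟨?_, ?_⟩, ?_⟩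
  · exact (isoToPi_isoMk _).trans (isDiagonal_lift_dgenToPi.lt_eq_zero a b hab q)
  · exact (isoToPi_isoMk _).trans (isDiagonal_lift_dgenToPi.rt_eq_zero a b hab q)
  obtain ⟨hsrc, htgt, hε_pt, hε, -, hΔ_pt, hΔ, -⟩ := hB₁
  obtain ⟨hst, hε_id, hε', hΔ'⟩ := hB₂
  have hsrc_eq : (isoEquivPi k hloop).toLinearMap ∘ₗ B₁.src.toLinearMap =
      B₂.src.toLinearMap := by
    refine (Pi.basisFun k V).ext fun p => ?_
    simp [hsrc, hst, hpt, map_sum]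
  have htgt_eq : (isoEquivPi k hloop).toLinearMap ∘ₗ B₁.tgt = B₂.tgt := by
    refine (Pi.basisFun k V).ext fun p => ?_
    simp [htgt, hst, hpt, map_sum]
  have hsrc' : ∀ a, isoEquivPi k hloop (B₁.src a) = B₂.src a := LinearMap.congr_fun hsrc_eq
  have htgt' : ∀ a, isoEquivPi k hloop (B₁.tgt a) = B₂.tgt a := LinearMap.congr_fun htgt_eq
  have hsymm : ∀ g, (isoEquivPi k hloop).symm (piMk k V E (ι k g)) = piGenToIso k V E g :=
    fun g => (piToIso_piMk hloop _).trans (lift_ι_apply _ _)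
  refine isBialgebroidHom_of_generators B₁ B₂ _ (piMk k V E)
    (RingQuot.mkAlgHom_surjective k _) hsrc' htgt' ?_ ?_ ?_ hΔ'
  · intro g a
    refine ⟨a g.source, ?_, ?_⟩
    · have : LinearMap.mulLeft k (piMk k V E (ι k g)) ∘ₗ B₂.src.toLinearMap =
          (LinearMap.proj g.source).smulRight (piMk k V E (ι k g)) := by
        refine (Pi.basisFun k V).ext fun p => ?_
        simp [hst, piMk_mul_id, Pi.single_apply]
      exact LinearMap.congr_fun this a
    · have : LinearMap.mulLeft k (piMk k V E (ι k g)) ∘ₗ B₂.tgt =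
          (LinearMap.proj g.source).smulRight (piMk k V E (ι k g)) := by
        refine (Pi.basisFun k V).ext fun p => ?_
        simp [hst, piMk_mul_id, Pi.single_apply]
      exact LinearMap.congr_fun this a
  · intro g
    rw [hsymm]
    cases g with
    | id p => simpa [piGenToIso, hε_id] using hε_pt p p
    | fwd a b h => simpa [piGenToIso, hε'] using (hε a b a b h h).1
    | bwd a b h => simpa [piGenToIso, hε'] using (hε a b a b h h).2
  · intro g
    rw [hsymm]
    cases g with
    | id p =>
      have := map_mem_balancer (f := (isoEquivPi k hloop).toAlgHom) hsrc' htgt' (hΔ_pt p p)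
      rw [map_sub, map_sum, Finset.sum_eq_single p] at this
      · simpa [hpt, piGenToIso] using this
      · intro i _ hi
        simp [hpt, hi]
      · simp
    | fwd a b h =>
      have := map_mem_balancer (f := (isoEquivPi k hloop).toAlgHom) hsrc' htgt'
        (hΔ a b a b h h).1
      rw [map_sub, map_sum, Finset.sum_eq_single a, map_sum, Finset.sum_eq_single b] at this
      · simpa [hpar, h, piGenToIso] using this
      · intro t _ ht
        split_ifs <;> simp [hpar, ht.symm]
      · simp
      · intro s _ hs
        rw [map_sum]
        refine Finset.sum_eq_zero fun t _ => ?_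
        split_ifs <;> simp [hpar, hs.symm]
      · simp
    | bwd a b h =>
      have := map_mem_balancer (f := (isoEquivPi k hloop).toAlgHom) hsrc' htgt'
        (hΔ a b a b h h).2
      rw [map_sub, map_sum, Finset.sum_eq_single a, map_sum, Finset.sum_eq_single b] at this
      · simpa [hrev, h, piGenToIso] using this
      · intro t _ ht
        split_ifs <;> simp [hrev, ht.symm]
      · simp
      · intro s _ hs
        rw [map_sum]
        refine Finset.sum_eq_zero fun t _ => ?_
        split_ifs <;> simp [hrev, hs.symm]
      · simp
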